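/- Let K ∈ ℝ, N > 1, a < 0 < b, and let h : (a,b) → (0,∞) be a function such that h^{1/(N−1)} is σ_{K/(N−1)}-concave on (a,b). Set H := d⁺(log h)(0). Then h(r)/h(0) ≤ J_{H,K,N}(r) for all r ∈ (0,b). -/

import Mathlib

open Real Set Filter MeasureTheory Topology

/-- Generalized sine: the solution of `v'' + κ v = 0`, `v 0 = 0`, `v' 0 = 1`. -/
noncomputable def sinK (κ r : ℝ) : ℝ :=
  if 0 < κ then Real.sin (Real.sqrt κ * r) / Real.sqrt κ
  else if κ = 0 then r
  else Real.sinh (Real.sqrt (-κ) * r) / Real.sqrt (-κ)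

/-- Generalized cosine: the solution of `v'' + κ v = 0`, `v 0 = 1`, `v' 0 = 0`. -/
noncomputable def cosK (κ r : ℝ) : ℝ :=
  if 0 < κ then Real.cos (Real.sqrt κ * r)
  else if κ = 0 then 1
  else Real.cosh (Real.sqrt (-κ) * r)

/-- Distortion coefficient `σ_κ^{(t)}(θ)` (for `θ < π_κ`; `σ_κ^{(t)}(0) = t`). -/
noncomputable def sigmaCoeff (κ t θ : ℝ) : ℝ :=
  if θ = 0 then t else sinK κ (t * θ) / sinK κ θ

/-- `u` is `σ_κ`-concave on `I ⊆ ℝ`.  The requirement `θ := |r₁ - r₀| < π_κ`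
(encoded by `κ ≤ 0 ∨ |r₁ - r₀| < π/√κ`) expresses that the inequality with the
value `σ_κ^{(t)}(θ) = ∞` for `θ ≥ π_κ` cannot hold for a positive function. -/
def IsSigmaConcaveOn (κ : ℝ) (I : Set ℝ) (u : ℝ → ℝ) : Prop :=
  ∀ r₀ ∈ I, ∀ r₁ ∈ I,
    (r₀ ≠ r₁ → (κ ≤ 0 ∨ |r₁ - r₀| < Real.pi / Real.sqrt κ)) ∧
    ∀ t ∈ Set.Icc (0:ℝ) 1,
      sigmaCoeff κ (1 - t) |r₁ - r₀| * u r₀ + sigmaCoeff κ t |r₁ - r₀| * u r₁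
        ≤ u ((1 - t) * r₀ + t * r₁)

/-- Right derivative `d⁺u(r) = L`, i.e. `(u (r+h) - u r)/h → L` as `h ↓ 0`. -/
def HasRightDerivAt (u : ℝ → ℝ) (r L : ℝ) : Prop :=
  Filter.Tendsto (fun h : ℝ => (u (r + h) - u r) / h) (nhdsWithin 0 (Set.Ioi 0)) (nhds L)

/-- Left derivative `d⁻u(r) = L`, i.e. `(u (r-h) - u r)/(-h) → L` as `h ↓ 0`. -/
def HasLeftDerivAt (u : ℝ → ℝ) (r L : ℝ) : Prop :=
  Filter.Tendsto (fun h : ℝ => (u (r - h) - u r) / (-h)) (nhdsWithin 0 (Set.Ioi 0)) (nhds L)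

/-- The Jacobian function `J_{H,K,N}(r) = (cos_{K/(N-1)}(r) + H/(N-1) sin_{K/(N-1)}(r))₊^{N-1}`. -/
noncomputable def Jac (H K N r : ℝ) : ℝ :=
  (max (cosK (K/(N-1)) r + (H/(N-1)) * sinK (K/(N-1)) r) 0) ^ (N-1)

theorem sinK_hasDerivAt (κ r : ℝ) : HasDerivAt (sinK κ) (cosK κ r) r := by
  unfold sinK cosK
  split_ifs with h1 h2
  · have hs : Real.sqrt κ ≠ 0 := (Real.sqrt_pos.2 h1).ne'
    have := (((hasDerivAt_id r).const_mul (Real.sqrt κ)).sin).div_const (Real.sqrt κ)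
    refine HasDerivAt.congr_deriv this ?_
    simp only [id]
    field_simp
  · exact hasDerivAt_id r
  · have h3 : 0 < -κ := by
      have := lt_of_le_of_ne (not_lt.1 h1) h2
      linarith
    have hs : Real.sqrt (-κ) ≠ 0 := (Real.sqrt_pos.2 h3).ne'
    have := (((hasDerivAt_id r).const_mul (Real.sqrt (-κ))).sinh).div_const (Real.sqrt (-κ))
    refine HasDerivAt.congr_deriv this ?_
    simp only [id]
    field_simp

theorem sinK_zero (κ : ℝ) : sinK κ 0 = 0 := by
  unfold sinK
  split_ifs <;> simp

theorem cosK_zero (κ : ℝ) : cosK κ 0 = 1 := by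
  unfold cosK
  split_ifs <;> simp

theorem sinK_pos (κ r : ℝ) (hr : 0 < r) (h : κ ≤ 0 ∨ r < Real.pi / Real.sqrt κ) :
    0 < sinK κ r := by
  unfold sinK
  split_ifs with h1 h2
  · have hs : 0 < Real.sqrt κ := Real.sqrt_pos.2 h1
    rcases h with h | h
    · linarith
    · rw [lt_div_iff₀ hs] at h
      exact div_pos (Real.sin_pos_of_pos_of_lt_pi (by positivity) (by linarith)) hs
  · exact hr
  · have h3 : 0 < -κ := by
      have := lt_of_le_of_ne (not_lt.1 h1) h2
      linarith
    have hs : 0 < Real.sqrt (-κ) := Real.sqrt_pos.2 h3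
    exact div_pos (Real.sinh_pos_iff.2 (by positivity)) hs

/-- Corollary 4.3 / `cor:key`:
if `h : (a,b) → (0,∞)` with `a < 0 < b` is such that `h^{1/(N-1)}` is `σ_{K/(N-1)}`-concave,
and `H = d⁺(log h)(0)`, then `h(r)/h(0) ≤ J_{H,K,N}(r)` for `r ∈ (0,b)`. -/
theorem density_jacobian_comparison (K N a b : ℝ) (hN : 1 < N) (ha : a < 0) (hb : 0 < b)
    (h : ℝ → ℝ) (hpos : ∀ r ∈ Set.Ioo a b, 0 < h r)
    (hconc : IsSigmaConcaveOn (K / (N - 1)) (Set.Ioo a b)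
      (fun r => h r ^ ((1 : ℝ) / (N - 1))))
    (H : ℝ) (hH : HasRightDerivAt (fun r => Real.log (h r)) 0 H)
    (r : ℝ) (hr : r ∈ Set.Ioo 0 b) :
    h r / h 0 ≤ Jac H K N r := by
  have hN' : 0 < N - 1 := by linarith
  obtain ⟨hr0, hrb⟩ := hr
  have h0m : (0:ℝ) ∈ Set.Ioo a b := ⟨ha, hb⟩
  have hrm : r ∈ Set.Ioo a b := ⟨by linarith, hrb⟩
  obtain ⟨c1, c2⟩ := hconc 0 h0m r hrm
  have habs : |r - 0| = r := by rw [sub_zero, abs_of_pos hr0]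
  rw [habs] at c1 c2
  have hsp : 0 < sinK (K / (N - 1)) r := sinK_pos _ _ hr0 (c1 hr0.ne)
  set κ := K / (N - 1) with hκ
  set u : ℝ → ℝ := fun r => h r ^ ((1 : ℝ) / (N - 1)) with hu
  have hupos : ∀ x ∈ Set.Ioo a b, 0 < u x := fun x hx => Real.rpow_pos_of_pos (hpos x hx) _
  have hlog : HasDerivWithinAt (fun x => Real.log (h x)) H (Set.Ioi 0) 0 := by
    rw [hasDerivWithinAt_iff_tendsto_slope' (by simp)]
    refine hH.congr fun x => ?_
    simp [slope_def_field]
  have hnear : ∀ᶠ x in 𝓝[>] (0:ℝ), x ∈ Set.Ioo 0 r := Ioo_mem_nhdsGT hr0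
  have hexp : ∀ x ∈ Set.Ioo a b, u x = Real.exp (Real.log (h x) * (1 / (N - 1))) :=
    fun x hx => Real.rpow_def_of_pos (hpos x hx) _
  have hud : HasDerivWithinAt u (u 0 * (H / (N - 1))) (Set.Ioi 0) 0 := by
    have h1 := (hlog.mul_const (1 / (N - 1))).exp
    have h2 : HasDerivWithinAt u _ (Set.Ioi 0) 0 := h1.congr_of_eventuallyEq
      (by filter_upwards [hnear] with x hx
          exact hexp x ⟨by linarith [hx.1], by linarith [hx.2]⟩) (hexp 0 h0m)
    convert h2 using 1
    rw [hexp 0 h0m]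
    ring
  have hfd : HasDerivWithinAt
      (fun s => u s * sinK κ r - sinK κ (r - s) * u 0 - sinK κ s * u r)
      (u 0 * (H / (N - 1)) * sinK κ r - (cosK κ r * (-1)) * u 0 - 1 * u r) (Set.Ioi 0) 0 := by
    have e1 : HasDerivAt (fun s => sinK κ (r - s)) (cosK κ r * (-1)) 0 := by
      have e2 : HasDerivAt (fun s : ℝ => r - s) (-1) 0 := by
        simpa using (hasDerivAt_id (0:ℝ)).const_sub r
      have e3 : HasDerivAt (sinK κ) (cosK κ r) (r - 0) := by
        rw [sub_zero]; exact sinK_hasDerivAt κ r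
      exact e3.comp (0:ℝ) e2
    have e4 : HasDerivAt (sinK κ) 1 0 := by
      have := sinK_hasDerivAt κ 0
      rwa [cosK_zero] at this
    exact ((hud.mul_const _).sub (e1.hasDerivWithinAt.mul_const _)).sub
      (e4.hasDerivWithinAt.mul_const _)
  have key : 0 ≤ u 0 * (H / (N - 1)) * sinK κ r - (cosK κ r * (-1)) * u 0 - 1 * u r := by
    rw [hasDerivWithinAt_iff_tendsto_slope' (by simp)] at hfd
    refine ge_of_tendsto hfd ?_
    filter_upwards [hnear] with s hs
    obtain ⟨hs0, hsr⟩ := hs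
    have hc := c2 (s / r) ⟨by positivity, by rw [div_le_one hr0]; exact hsr.le⟩
    have t1 : (1 - s / r) * r = r - s := by field_simp
    have t2 : s / r * r = s := by field_simp
    simp only [sigmaCoeff, if_neg hr0.ne', t1, t2, mul_zero, zero_add] at hc
    have hc2 : (sinK κ (r - s) * u 0 + sinK κ s * u r) / sinK κ r ≤ u s := by
      refine le_trans (le_of_eq ?_) hc
      ring
    rw [div_le_iff₀ hsp] at hc2
    rw [slope_def_field]
    simp only [sinK_zero, sub_zero]
    apply div_nonneg _ hs0.le
    linarith
  have hu0 := hupos 0 h0m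
  have hur := hupos r hrm
  have hle : u r / u 0 ≤ cosK κ r + (H / (N - 1)) * sinK κ r := by
    rw [div_le_iff₀ hu0]
    linarith
  have hpw : ∀ x ∈ Set.Ioo a b, u x ^ (N - 1) = h x := by
    intro x hx
    simp only [hu]
    rw [← Real.rpow_mul (hpos x hx).le, one_div, inv_mul_cancel₀ hN'.ne', Real.rpow_one]
  rw [← hpw r hrm, ← hpw 0 h0m, ← Real.div_rpow hur.le hu0.le]
  unfold Jac
  exact Real.rpow_le_rpow (div_pos hur hu0).le (hle.trans (le_max_left _ _)) hN'.le
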